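/- Fix ε ∈ (0,1/2), m ∈ [−1+2ε, 1−2ε], and suppose Assumption 1 holds. Given λ* > 1, let ς* = E[h_1 g'(h_1 λ*)]. There exists N_ε > 0, independent of λ*, such that for every n > N_ε and every h ∈ L^ε_n, the set R_{n,λ*}(h) = { x ∈ ℝ : −A⁻_n(h) < x < (nς* ∧ Σ_n(h)) − A⁺_n(h) } is nonempty; in particular A⁺_n(h) − A⁻_n(h) < nς* ∧ Σ_n(h). -/

import Mathlib

open MeasureTheory Real Filter Set
open scoped ENNReal Topology BigOperators

noncomputable section

/-- Assumption 1 of the paper, phrased for the law `μ` of `h₁`. -/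
structure Assumption1 (μ : Measure ℝ) : Prop where
  isProb : IsProbabilityMeasure μ
  acPart : ¬ μ.MutuallySingular (volume : Measure ℝ)
  smallBall : ∃ ε > (0:ℝ), ∃ p₁ > (0:ℝ), ∀ t ∈ Set.Ico (0:ℝ) ε,
    (μ {x : ℝ | |x| < t}).toReal ≤ p₁ * t
  densityLB : ∃ c d p₂ : ℝ, c < d ∧ 0 < p₂ ∧
    ∀ s : Set ℝ, s ⊆ Set.Icc c d → MeasurableSet s →
      ENNReal.ofReal p₂ * volume s ≤ μ s
  intAbs : Integrable (fun x : ℝ => |x|) μ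
  intSq : Integrable (fun x : ℝ => x ^ 2) μ
  intCube : Integrable (fun x : ℝ => |x| ^ 3) μ

/-- `g(λ) = log(((1+m)/2)e^{λ(1−m)} + ((1−m)/2)e^{−λ(1+m)})`. -/
def gfun (m lam : ℝ) : ℝ :=
  Real.log ((1 + m) / 2 * Real.exp (lam * (1 - m)) + (1 - m) / 2 * Real.exp (-(lam * (1 + m))))

/-- `M_n(h,λ) = Σ_{i=1}^n g(λ h_i)`. -/
def Mn (m : ℝ) (n : ℕ) (hs : ℕ → ℝ) (lam : ℝ) : ℝ :=
  ∑ i ∈ Finset.range n, gfun m (lam * hs i)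

/-- `M*_n(h,a) = sup_{λ∈ℝ}(λa − M_n(h,λ))`. -/
def MstarN (m : ℝ) (n : ℕ) (hs : ℕ → ℝ) (a : ℝ) : ℝ :=
  ⨆ lam : ℝ, (lam * a - Mn m n hs lam)

/-- `Σ_n(h) = −m Σ_{i=1}^n h_i + Σ_{i=1}^n |h_i|`. -/
def SigmaN (m : ℝ) (n : ℕ) (hs : ℕ → ℝ) : ℝ :=
  -m * ∑ i ∈ Finset.range n, hs i + ∑ i ∈ Finset.range n, |hs i|

/-- `Γ_n(h) = −Σ_{i=1}^n log(1 + sign(h_i) m) + n log 2`. -/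
def GammaN (m : ℝ) (n : ℕ) (hs : ℕ → ℝ) : ℝ :=
  -(∑ i ∈ Finset.range n, Real.log (1 + Real.sign (hs i) * m)) + n * Real.log 2

/-- The set `L^ε_n` of good disorder configurations. -/
def Lset (m ε : ℝ) (n : ℕ) : Set (ℕ → ℝ) :=
  {hs | 2 * π * ∑ i ∈ Finset.range n, (hs i) ^ 2 ≤ (n : ℝ) ^ ((3:ℝ)/2) ∧
    (∀ i < n, 16 / ((n : ℝ)^5 * ε^8) ≤ 2 * π * (hs i)^2) ∧
    SigmaN m n hs ∈ Set.Ioo ((n : ℝ) ^ ((4:ℝ)/5)) ((n : ℝ) ^ ((3:ℝ)/2))}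

/-- `ς* = E[h₁ g'(h₁ λ*)]`. -/
def sigmaStar (μ : Measure ℝ) (m lamStar : ℝ) : ℝ :=
  ∫ x, x * deriv (gfun m) (x * lamStar) ∂μ

/-!
If `f ≥ 0`, its Legendre transform satisfies `f*(t b) ≤ t f*(b)` for `t ∈ [0, 1]`, so
`(b - a) f*(a) ≤ a (f*(b) - f*(a))` whenever `0 < a ≤ b`. With `f = M_n(h, ·)`, `a = A⁻_n` and
`b = A⁺_n` this reads `(A⁺_n - A⁻_n) C⁻_n ≤ (11/4) A⁻_n log n < (11/4) Σ_n log n`. Since `Γ_n`, and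
with it `C⁻_n`, grows at least linearly in `n`, the gap `A⁺_n - A⁻_n` is `O(Σ_n log n / n)`: smaller
than `Σ_n`, and smaller than any fixed multiple of `n` as soon as `Σ_n ≤ n ^ p` with `p < 2`.
Finally `ς*` is positive and nondecreasing in `λ*`, which makes the threshold uniform in `λ*`.
-/

section LegendreTransform

/-- The Legendre transform `f*(a) = sup_l (l a - f l)` of a real function. It takes the junk value
`0` at the points `a` where the supremum is infinite. -/
def legendreTransform (f : ℝ → ℝ) (a : ℝ) : ℝ :=
  ⨆ l : ℝ, (l * a - f l)

variable {f : ℝ → ℝ} {a b c c' t : ℝ}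

lemma legendreTransform_mul_le (hf : ∀ l, 0 ≤ f l)
    (hb : BddAbove (range fun l : ℝ => l * b - f l)) (ht₀ : 0 ≤ t) (ht₁ : t ≤ 1) :
    legendreTransform f (t * b) ≤ t * legendreTransform f b := by
  refine ciSup_le fun l => ?_
  calc l * (t * b) - f l ≤ l * (t * b) - t * f l := by
        linarith [mul_le_of_le_one_left (hf l) ht₁]
    _ = t * (l * b - f l) := by ring
    _ ≤ t * legendreTransform f b := mul_le_mul_of_nonneg_left (le_ciSup hb l) ht₀

lemma sub_mul_le_of_legendreTransform_eq (hf : ∀ l, 0 ≤ f l)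
    (hb : BddAbove (range fun l : ℝ => l * b - f l)) (ha : 0 < a) (hc : 0 ≤ c) (hcc' : c ≤ c')
    (hfa : legendreTransform f a = c) (hfb : legendreTransform f b = c') :
    (b - a) * c ≤ a * (c' - c) := by
  rcases le_total b a with hba | hab
  · calc (b - a) * c ≤ 0 := mul_nonpos_of_nonpos_of_nonneg (sub_nonpos.2 hba) hc
      _ ≤ a * (c' - c) := mul_nonneg ha.le (sub_nonneg.2 hcc')
  · have hb₀ : 0 < b := ha.trans_le hab
    have chord : c ≤ a / b * c' := by
      simpa only [div_mul_cancel₀ a hb₀.ne', hfa, hfb] using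
        legendreTransform_mul_le hf hb (div_nonneg ha.le hb₀.le) ((div_le_one hb₀).2 hab)
    rw [div_mul_eq_mul_div, le_div_iff₀ hb₀] at chord
    linarith

end LegendreTransform

section TiltedCosh

/-- The moment generating function `cosh y + m sinh y` of a `±1`-valued variable of
mean `m`, so that `gfun m y = log (tiltedCosh m y) - m * y` (see `gfun_eq`). -/
def tiltedCosh (m y : ℝ) : ℝ :=
  cosh y + m * sinh y

variable {m : ℝ}

lemma abs_sinh_le_cosh (y : ℝ) : |sinh y| ≤ cosh y := by
  rw [abs_sinh, ← cosh_abs]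
  exact (sinh_lt_cosh _).le

lemma one_sub_abs_mul_cosh_le_tiltedCosh (m y : ℝ) : (1 - |m|) * cosh y ≤ tiltedCosh m y := by
  have h : |m * sinh y| ≤ |m| * cosh y := by
    rw [abs_mul]
    exact mul_le_mul_of_nonneg_left (abs_sinh_le_cosh y) (abs_nonneg m)
  rw [tiltedCosh]
  linarith [neg_le_of_abs_le h]

lemma tiltedCosh_pos (hm : |m| < 1) (y : ℝ) : 0 < tiltedCosh m y :=
  (mul_pos (sub_pos.2 hm) (cosh_pos y)).trans_le (one_sub_abs_mul_cosh_le_tiltedCosh m y)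

lemma hasDerivAt_tiltedCosh (m y : ℝ) : HasDerivAt (tiltedCosh m) (sinh y + m * cosh y) y :=
  (hasDerivAt_cosh y).add ((hasDerivAt_sinh y).const_mul m)

lemma continuous_tiltedCosh (m : ℝ) : Continuous (tiltedCosh m) :=
  continuous_cosh.add (continuous_sinh.const_mul m)

end TiltedCosh

section CumulantGeneratingFunction

variable {m : ℝ}

lemma gfun_nonneg (hm : |m| ≤ 1) (y : ℝ) : 0 ≤ gfun m y := by
  obtain ⟨hm₁, hm₂⟩ := abs_le.1 hm
  refine log_nonneg ?_
  calc (1 : ℝ) = (1 + m) / 2 * (y * (1 - m) + 1) + (1 - m) / 2 * (-(y * (1 + m)) + 1) := by ring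
    _ ≤ _ := by gcongr <;> first | linarith | exact add_one_le_exp _

lemma gfun_eq (hm : |m| < 1) (y : ℝ) : gfun m y = log (tiltedCosh m y) - m * y := by
  have factor : (1 + m) / 2 * exp (y * (1 - m)) + (1 - m) / 2 * exp (-(y * (1 + m))) =
      tiltedCosh m y * exp (-(m * y)) := by
    rw [show y * (1 - m) = y + -(m * y) by ring, show -(y * (1 + m)) = -y + -(m * y) by ring,
      exp_add, exp_add, tiltedCosh, cosh_eq, sinh_eq]
    ring
  rw [gfun, factor, log_mul (tiltedCosh_pos hm y).ne' (exp_pos _).ne', log_exp, sub_eq_add_neg]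

lemma abs_sub_mul_add_log_le_gfun (hm : |m| < 1) (y : ℝ) :
    |y| - m * y + log ((1 - |m|) / 2) ≤ gfun m y := by
  have : 0 < 1 - |m| := sub_pos.2 hm
  have exp_le : (1 - |m|) / 2 * exp |y| ≤ tiltedCosh m y :=
    calc (1 - |m|) / 2 * exp |y| ≤ (1 - |m|) / 2 * (exp y + exp (-y)) := by
          gcongr
          exact exp_abs_le y
      _ = (1 - |m|) * cosh y := by rw [cosh_eq]; ring
      _ ≤ tiltedCosh m y := one_sub_abs_mul_cosh_le_tiltedCosh m y
  have log_le := log_le_log (by positivity) exp_le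
  rw [log_mul (by positivity) (exp_pos _).ne', log_exp] at log_le
  rw [gfun_eq hm]
  linarith

lemma deriv_gfun (hm : |m| < 1) (y : ℝ) :
    deriv (gfun m) y = (1 - m ^ 2) * sinh y / tiltedCosh m y := by
  have h : HasDerivAt (gfun m) ((sinh y + m * cosh y) / tiltedCosh m y - m * 1) y :=
    (((hasDerivAt_tiltedCosh m y).log (tiltedCosh_pos hm y).ne').sub
      ((hasDerivAt_id y).const_mul m)).congr_of_eventuallyEq (.of_forall (gfun_eq hm))
  rw [h.deriv, eq_div_iff (tiltedCosh_pos hm y).ne', sub_mul,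
    div_mul_cancel₀ _ (tiltedCosh_pos hm y).ne', tiltedCosh]
  ring

lemma one_sub_sq_pos_of_abs_lt_one (hm : |m| < 1) : 0 < 1 - m ^ 2 :=
  sub_pos.2 ((sq_lt_one_iff_abs_lt_one m).2 hm)

lemma continuous_deriv_gfun (hm : |m| < 1) : Continuous (deriv (gfun m)) := by
  rw [funext (deriv_gfun hm)]
  exact (continuous_sinh.const_mul _).div (continuous_tiltedCosh m)
    fun y => (tiltedCosh_pos hm y).ne'

lemma monotone_deriv_gfun (hm : |m| < 1) : Monotone (deriv (gfun m)) := by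
  intro x y hxy
  have hsinh : 0 ≤ sinh (y - x) := sinh_nonneg_iff.2 (sub_nonneg.2 hxy)
  rw [deriv_gfun hm, deriv_gfun hm, div_le_div_iff₀ (tiltedCosh_pos hm x) (tiltedCosh_pos hm y),
    ← sub_nonneg]
  calc 0 ≤ (1 - m ^ 2) * sinh (y - x) := mul_nonneg (one_sub_sq_pos_of_abs_lt_one hm).le hsinh
    _ = _ := by rw [sinh_sub, tiltedCosh, tiltedCosh]; ring

lemma abs_deriv_gfun_le (hm : |m| < 1) (y : ℝ) : |deriv (gfun m) y| ≤ 1 + |m| := by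
  have : 0 ≤ 1 - |m| := (sub_pos.2 hm).le
  rw [deriv_gfun hm, abs_div, abs_of_pos (tiltedCosh_pos hm y), div_le_iff₀ (tiltedCosh_pos hm y),
    abs_mul, abs_of_pos (one_sub_sq_pos_of_abs_lt_one hm), ← sq_abs m]
  calc (1 - |m| ^ 2) * |sinh y| = (1 + |m|) * ((1 - |m|) * |sinh y|) := by ring
    _ ≤ (1 + |m|) * ((1 - |m|) * cosh y) := by
        gcongr
        exact abs_sinh_le_cosh y
    _ ≤ (1 + |m|) * tiltedCosh m y := by
        gcongr
        exact one_sub_abs_mul_cosh_le_tiltedCosh m y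

lemma mul_deriv_gfun_pos (hm : |m| < 1) {x l : ℝ} (hx : x ≠ 0) (hl : 0 < l) :
    0 < x * deriv (gfun m) (x * l) := by
  have hsinh : 0 < x * sinh (x * l) := by
    rcases hx.lt_or_gt with hx | hx
    · exact mul_pos_of_neg_of_neg hx (sinh_neg_iff.2 (mul_neg_of_neg_of_pos hx hl))
    · exact mul_pos hx (sinh_pos_iff.2 (mul_pos hx hl))
  rw [deriv_gfun hm]
  calc 0 < (1 - m ^ 2) * (x * sinh (x * l)) / tiltedCosh m (x * l) :=
        div_pos (mul_pos (one_sub_sq_pos_of_abs_lt_one hm) hsinh) (tiltedCosh_pos hm _)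
    _ = _ := by ring

end CumulantGeneratingFunction

section SigmaStar

variable {μ : Measure ℝ} {m : ℝ}

lemma integrable_mul_deriv_gfun (hμ : Integrable (fun x : ℝ => |x|) μ) (hm : |m| < 1) (l : ℝ) :
    Integrable (fun x => x * deriv (gfun m) (x * l)) μ := by
  refine (hμ.const_mul (1 + |m|)).mono' ?_ (.of_forall fun x => ?_)
  · exact (continuous_id.mul ((continuous_deriv_gfun hm).comp
      (continuous_mul_const l))).aestronglyMeasurable
  · rw [norm_mul, mul_comm]
    exact mul_le_mul_of_nonneg_right (abs_deriv_gfun_le hm _) (abs_nonneg x)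

lemma monotone_sigmaStar (hμ : Integrable (fun x : ℝ => |x|) μ) (hm : |m| < 1) :
    Monotone (sigmaStar μ m) := by
  intro l l' hll'
  refine integral_mono (integrable_mul_deriv_gfun hμ hm l) (integrable_mul_deriv_gfun hμ hm l')
    fun x => ?_
  rcases le_total 0 x with hx | hx
  · exact mul_le_mul_of_nonneg_left
      (monotone_deriv_gfun hm (mul_le_mul_of_nonneg_left hll' hx)) hx
  · exact mul_le_mul_of_nonpos_left
      (monotone_deriv_gfun hm (mul_le_mul_of_nonpos_left hll' hx)) hx

lemma sigmaStar_pos (hμ : Integrable (fun x : ℝ => |x|) μ) (hμ₀ : μ {0}ᶜ ≠ 0) (hm : |m| < 1)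
    {l : ℝ} (hl : 0 < l) : 0 < sigmaStar μ m l := by
  have nonneg : 0 ≤ fun x : ℝ => x * deriv (gfun m) (x * l) := by
    intro x
    rcases eq_or_ne x 0 with rfl | hx
    · simp
    · exact (mul_deriv_gfun_pos hm hx hl).le
  refine (integral_pos_iff_support_of_nonneg nonneg (integrable_mul_deriv_gfun hμ hm l)).2 ?_
  exact (pos_iff_ne_zero.2 hμ₀).trans_le
    (measure_mono fun x hx => (mul_deriv_gfun_pos hm hx hl).ne')

lemma Assumption1.measure_compl_zero_ne_zero (hμ : Assumption1 μ) : μ {0}ᶜ ≠ 0 := fun h =>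
  hμ.acPart ⟨{0}ᶜ, (measurableSet_singleton 0).compl, h, by simp⟩

end SigmaStar

section Disorder

variable {m : ℝ} {n : ℕ} {hs : ℕ → ℝ}

lemma Mn_nonneg (hm : |m| ≤ 1) (l : ℝ) : 0 ≤ Mn m n hs l :=
  Finset.sum_nonneg fun _ _ => gfun_nonneg hm _

lemma mul_SigmaN_add_log_le_Mn (hm : |m| < 1) {l : ℝ} (hl : 0 ≤ l) :
    l * SigmaN m n hs + n * log ((1 - |m|) / 2) ≤ Mn m n hs l :=
  calc l * SigmaN m n hs + n * log ((1 - |m|) / 2)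
      = ∑ i ∈ Finset.range n, (|l * hs i| - m * (l * hs i) + log ((1 - |m|) / 2)) := by
        simp only [SigmaN, Finset.sum_add_distrib, Finset.sum_sub_distrib, abs_mul,
          abs_of_nonneg hl, ← Finset.mul_sum, Finset.sum_const, Finset.card_range, nsmul_eq_mul]
        ring
    _ ≤ Mn m n hs l := Finset.sum_le_sum fun i _ => abs_sub_mul_add_log_le_gfun hm (l * hs i)

lemma bddAbove_range_mul_sub_Mn (hm : |m| < 1) {a : ℝ} (ha : a ∈ Icc 0 (SigmaN m n hs)) :
    BddAbove (range fun l : ℝ => l * a - Mn m n hs l) := by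
  refine ⟨-(n * log ((1 - |m|) / 2)), ?_⟩
  rintro _ ⟨l, rfl⟩
  rcases le_total 0 l with hl | hl
  · linarith [mul_SigmaN_add_log_le_Mn (n := n) (hs := hs) hm hl,
      mul_le_mul_of_nonneg_left ha.2 hl]
  · have hlog : log ((1 - |m|) / 2) ≤ 0 :=
      log_nonpos (by linarith) (by linarith [abs_nonneg m])
    linarith [Mn_nonneg (n := n) (hs := hs) hm.le l, mul_nonpos_of_nonpos_of_nonneg hl ha.1,
      mul_nonpos_of_nonneg_of_nonpos n.cast_nonneg hlog]

lemma sub_lt_min_of_MstarN_eq (hm : |m| < 1) {a b c c' t : ℝ}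
    (ha : a ∈ Ioo 0 (SigmaN m n hs)) (hb : b ∈ Ioo 0 (SigmaN m n hs))
    (hMa : MstarN m n hs a = c) (hMb : MstarN m n hs b = c') (hc : 0 < c) (hcc' : c < c')
    (hgap : c' - c ≤ c) (ht : SigmaN m n hs * (c' - c) ≤ t * c) :
    b - a < min t (SigmaN m n hs) := by
  have key : (b - a) * c < SigmaN m n hs * (c' - c) :=
    calc (b - a) * c ≤ a * (c' - c) :=
          sub_mul_le_of_legendreTransform_eq (Mn_nonneg hm.le)
            (bddAbove_range_mul_sub_Mn hm ⟨hb.1.le, hb.2.le⟩) ha.1 hc.le hcc'.le hMa hMb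
      _ < SigmaN m n hs * (c' - c) := mul_lt_mul_of_pos_right ha.2 (sub_pos.2 hcc')
  refine lt_min (lt_of_mul_lt_mul_right (key.trans_le ht) hc.le)
    (lt_of_mul_lt_mul_right (key.trans_le ?_) hc.le)
  exact mul_le_mul_of_nonneg_left hgap (ha.1.trans ha.2).le

lemma mul_log_le_GammaN (hm : |m| < 1) : n * log (2 / (1 + |m|)) ≤ GammaN m n hs := by
  have hm₀ : 0 < 1 + |m| := by positivity
  have log_le : ∀ i ∈ Finset.range n, log (1 + Real.sign (hs i) * m) ≤ log (1 + |m|) := by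
    intro i _
    have abs_le : |Real.sign (hs i) * m| ≤ |m| := by
      rcases Real.sign_apply_eq (hs i) with h | h | h <;> simp [h]
    exact log_le_log (by linarith [neg_le_of_abs_le abs_le]) (by linarith [le_of_abs_le abs_le])
  have sum_le := Finset.sum_le_card_nsmul _ _ _ log_le
  rw [Finset.card_range, nsmul_eq_mul] at sum_le
  rw [GammaN, log_div two_ne_zero hm₀.ne']
  linarith

lemma inverse_MstarN_sub_lt_min (hm : |m| < 1) {ε κ σ p C L : ℝ} {A : ℝ → ℝ} (hσ : 0 ≤ σ)
    (hL : 0 < L) (hLn : L ≤ κ / 6 * n) (hLp : L * (n : ℝ) ^ p ≤ κ * σ / 6 * (n : ℝ) ^ 2)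
    (hGamma : κ * n ≤ ε * GammaN m n hs) (hSigma : SigmaN m n hs ≤ (n : ℝ) ^ p)
    (hC : C ∈ Ioo (ε * GammaN m n hs) ((1 - ε) * GammaN m n hs))
    (hA : ∀ c ∈ Ioo 0 (GammaN m n hs), A c ∈ Ioo 0 (SigmaN m n hs) ∧ MstarN m n hs (A c) = c) :
    A (C + 2 * L) - A (C - 3 / 4 * L) < min (n * σ) (SigmaN m n hs) := by
  have hC_minus : κ * n / 2 ≤ C - 3 / 4 * L := by linarith [hC.1]
  have hC_plus : C + 2 * L < GammaN m n hs := by linarith [hC.2]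
  obtain ⟨hA_minus, hM_minus⟩ := hA (C - 3 / 4 * L) ⟨by linarith, by linarith⟩
  obtain ⟨hA_plus, hM_plus⟩ := hA (C + 2 * L) ⟨by linarith, hC_plus⟩
  refine sub_lt_min_of_MstarN_eq hm hA_minus hA_plus hM_minus hM_plus (by linarith) (by linarith)
    (by linarith) ?_
  calc SigmaN m n hs * (C + 2 * L - (C - 3 / 4 * L))
      = 11 / 4 * (L * SigmaN m n hs) := by ring
    _ ≤ 11 / 4 * (L * (n : ℝ) ^ p) := by gcongr
    _ ≤ 3 * (κ * σ / 6 * (n : ℝ) ^ 2) := by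
        have : 0 ≤ L * (n : ℝ) ^ p := by positivity
        linarith
    _ = n * σ * (κ * n / 2) := by ring
    _ ≤ n * σ * (C - 3 / 4 * L) := by gcongr

end Disorder

lemma eventually_log_mul_rpow_le {p q δ : ℝ} (hpq : p < q) (hδ : 0 < δ) :
    ∀ᶠ x : ℝ in atTop, log x * x ^ p ≤ δ * x ^ q := by
  filter_upwards [(isLittleO_log_rpow_atTop (sub_pos.2 hpq)).bound hδ, eventually_gt_atTop 0]
    with x hlog hx
  calc log x * x ^ p ≤ δ * x ^ (q - p) * x ^ p := by
        rw [norm_of_nonneg (rpow_nonneg hx.le _)] at hlog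
        gcongr
        exact (le_abs_self _).trans hlog
    _ = δ * x ^ q := by rw [mul_assoc, ← rpow_add hx, sub_add_cancel]

theorem stmt12_general {μ : Measure ℝ} (hμ : Integrable (fun x : ℝ => |x|) μ) (hμ₀ : μ {0}ᶜ ≠ 0)
    {ε m p lam₀ : ℝ} (hε : 0 < ε) (hm : |m| < 1) (hp : p < 2) (hlam₀ : 0 < lam₀) :
    ∃ N : ℝ, 0 < N ∧ ∀ lamStar : ℝ, lam₀ ≤ lamStar → ∀ n : ℕ, N < n →
      ∀ hs : ℕ → ℝ, SigmaN m n hs ≤ (n : ℝ) ^ p → ∀ C : ℝ,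
        C ∈ Ioo (ε * GammaN m n hs) ((1 - ε) * GammaN m n hs) →
        ∀ A : ℝ → ℝ,
          (∀ c ∈ Ioo 0 (GammaN m n hs),
            A c ∈ Ioo 0 (SigmaN m n hs) ∧ MstarN m n hs (A c) = c) →
          Set.Nonempty {x : ℝ | -A (C - 3 / 4 * log n) < x ∧
              x < min ((n : ℝ) * sigmaStar μ m lamStar) (SigmaN m n hs) - A (C + 2 * log n)} ∧
          A (C + 2 * log n) - A (C - 3 / 4 * log n) <
            min ((n : ℝ) * sigmaStar μ m lamStar) (SigmaN m n hs) := by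
  have hσ : 0 < sigmaStar μ m lam₀ := sigmaStar_pos hμ hμ₀ hm hlam₀
  have hγ : 0 < log (2 / (1 + |m|)) := log_pos ((one_lt_div (by positivity)).2 (by linarith))
  obtain ⟨N, hN⟩ := eventually_atTop.1
    ((eventually_log_mul_rpow_le zero_lt_one (δ := ε * log (2 / (1 + |m|)) / 6)
      (by positivity)).and
    (eventually_log_mul_rpow_le hp
      (δ := ε * log (2 / (1 + |m|)) * sigmaStar μ m lam₀ / 6) (by positivity)))
  refine ⟨max N 1, by positivity, fun lamStar hlam n hn hs hSigma C hC A hA => ?_⟩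
  obtain ⟨hlog_n, hlog_sq⟩ := hN n ((le_max_left _ _).trans hn.le)
  rw [rpow_zero, rpow_one, mul_one] at hlog_n
  rw [rpow_two] at hlog_sq
  have hlog : 0 < log n := log_pos ((le_max_right _ _).trans_lt hn)
  have hGamma : ε * log (2 / (1 + |m|)) * n ≤ ε * GammaN m n hs := by
    rw [mul_assoc, mul_comm (log _)]
    exact mul_le_mul_of_nonneg_left (mul_log_le_GammaN hm) hε.le
  have gap_lt : A (C + 2 * log n) - A (C - 3 / 4 * log n) <
      min (n * sigmaStar μ m lamStar) (SigmaN m n hs) :=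
    (inverse_MstarN_sub_lt_min hm hσ.le hlog hlog_n hlog_sq hGamma hSigma hC hA).trans_le
      (min_le_min_right _
        (mul_le_mul_of_nonneg_left (monotone_sigmaStar hμ hm hlam) n.cast_nonneg))
  exact ⟨nonempty_Ioo.2 (by linarith), gap_lt⟩

/-- the window `R_{n,λ*}(h)` is nonempty: there exists `N_ε > 0`,
independent of `λ*`, such that for all `λ* > 1`, `n > N_ε`, `h ∈ L^ε_n`,
`C ∈ (εΓ_n(h),(1−ε)Γ_n(h))`, and `A_n(h,·)` the inverse of `M*_n(h,·)`, the set
`{x : −A⁻_n(h) < x < (nς* ∧ Σ_n(h)) − A⁺_n(h)}` is nonempty; in particular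
`A⁺_n(h) − A⁻_n(h) < nς* ∧ Σ_n(h)`. -/
theorem stmt12 (μ : Measure ℝ) (hAss : Assumption1 μ) (ε m : ℝ)
    (hε : ε ∈ Set.Ioo (0 : ℝ) (1/2)) (hm : m ∈ Set.Icc (-1 + 2*ε) (1 - 2*ε)) :
    ∃ N : ℝ, 0 < N ∧ ∀ lamStar : ℝ, 1 < lamStar → ∀ n : ℕ, N < n →
      ∀ hs ∈ Lset m ε n, ∀ C : ℝ,
        C ∈ Set.Ioo (ε * GammaN m n hs) ((1 - ε) * GammaN m n hs) →
        ∀ A : ℝ → ℝ,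
          (∀ c ∈ Set.Ioo 0 (GammaN m n hs),
            A c ∈ Set.Ioo 0 (SigmaN m n hs) ∧ MstarN m n hs (A c) = c) →
          Set.Nonempty {x : ℝ | -A (C - 3/4 * Real.log n) < x ∧
              x < min ((n : ℝ) * sigmaStar μ m lamStar) (SigmaN m n hs) -
                A (C + 2 * Real.log n)} ∧
          A (C + 2 * Real.log n) - A (C - 3/4 * Real.log n) <
            min ((n : ℝ) * sigmaStar μ m lamStar) (SigmaN m n hs) := by
  have hm' : |m| < 1 := abs_lt.2 ⟨by linarith [hm.1, hε.1], by linarith [hm.2, hε.1]⟩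
  obtain ⟨N, hN, hwindow⟩ :=
    stmt12_general hAss.intAbs hAss.measure_compl_zero_ne_zero hε.1 hm' (p := 3 / 2) (by norm_num)
      one_pos
  exact ⟨N, hN, fun lamStar hlam n hn hs hhs =>
    hwindow lamStar hlam.le n hn hs hhs.2.2.2.le⟩
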